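/- Let $d\ge 5$, $k\in\mathbb{N}$, $1\le j\le\log_2(k)-2$, and set $\varepsilon=2^{-2k}$. For $t\in[0,1]$ define $s_t:\mathbb{Z}^d\to\mathbb{C}$ by $s_t(m)=e^{2\pi i|m|^2(t+i\varepsilon)}$ and $\widehat{s_t}(\alpha)=\sum_{m\in\mathbb{Z}^d}s_t(m)e^{-2\pi i m\cdot\alpha}$. Then there is a constant $C_d$ such that $\int_0^1\sup_{\alpha\in\Omega_{j,k}^c}|\widehat{s_t}(\alpha)|\,dt\le C_d\,\varepsilon^{-(d-2)/2}\,2^{-j/2}\,j^{-1}$. -/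

import Mathlib

open scoped BigOperators Real

noncomputable section

/-- Squared Euclidean norm of a lattice point, as a real number. -/
def nsq {d : ℕ} (m : Fin d → ℤ) : ℝ := ∑ i, ((m i : ℝ)) ^ 2

/-- `s_t(m) = e^{2πi|m|²(t+iε)}`. -/
def sFun {d : ℕ} (ε t : ℝ) (m : Fin d → ℤ) : ℂ :=
  Complex.exp (2 * (π : ℂ) * Complex.I * (nsq m : ℝ) * ((t : ℂ) + Complex.I * (ε : ℝ)))

/-- The Fourier transform `ŝ_t(α) = ∑_m s_t(m) e^{-2πi m·α}`. -/
def sHat {d : ℕ} (ε t : ℝ) (α : Fin d → ℝ) : ℂ :=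
  ∑' m : Fin d → ℤ,
    sFun ε t m * Complex.exp (-(2 * (π : ℂ) * Complex.I) * (∑ i, (m i : ℝ) * α i))

/-- `q_j = lcm{1,2,…,2^j}`. -/
def qlcm (j : ℕ) : ℕ := (Finset.Icc 1 (2 ^ j)).lcm id

/-- `Ω_{j,k} = [-2^{j-k}, 2^{j-k}]^d + (q_j⁻¹ ℤ)^d`, viewed as the (ℤ^d-periodic)
set of representatives in `ℝ^d` of the corresponding subset of `𝕋^d`. -/
def OmegaJK (d j k : ℕ) : Set (Fin d → ℝ) :=
  {α | ∃ ℓ : Fin d → ℤ, ∀ i, |α i - (ℓ i : ℝ) / (qlcm j : ℝ)| ≤ (2 : ℝ) ^ ((j : ℤ) - (k : ℤ))}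

/-!
The integral is estimated by the circle method. By Dirichlet's theorem every `t ∈ [0, 1]` lies
within `1 / (2 ^ k * q)` of a reduced fraction `p / q` with `q ≤ 2 ^ k`. Since `ŝ_t(α)` is a product
of Jacobi theta functions, splitting `ℤ` into residue classes modulo `q` (quadratic Gauss sums) and
Poisson summation give, with `V = 1 + ((t - p / q) / ε) ^ 2`,

  `|ŝ_t(α)| ≤ (q ε) ^ (-d / 2) V ^ (-d / 4) ∏ i, ∑ n : ℤ, exp (-π (n + q α_i) ^ 2 / (2 q² ε V))`,

and the Gaussian sums are bounded because `q² ε V ≤ 2`. If `q` divides `q_j` and `α ∉ Ω_{j,k}`, some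
`q α_i` is at distance at least `q 2 ^ (j - k)` from `ℤ`, which makes one Gaussian sum
`O(2 ^ (-(d - 3) j / 2) V ^ ((d - 3) / 4))`; the power of `V` that remains is integrable. If `q`
does not divide `q_j`, there is no such gain, but `q` is divisible by a prime power exceeding
`2 ^ j`. Integrating in `t` leaves `∑ q, q ^ (-(d / 2 - 1))` over these `q`, which is governed by
the primes exceeding `2 ^ j`, and Chebyshev's bound on their density supplies the factor `1 / j`.
-/

section ElementaryBounds

lemma exp_neg_le_rpow_neg {a x : ℝ} (ha : 0 < a) (hx : 0 < x) :
    Real.exp (-x) ≤ (x / a) ^ (-a) := by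
  have hxa : x / a ≤ Real.exp (x / a) := by linarith [Real.add_one_le_exp (x / a)]
  have hpow : (x / a) ^ a ≤ Real.exp x := by
    calc (x / a) ^ a ≤ Real.exp (x / a) ^ a := by gcongr
      _ = Real.exp x := by rw [← Real.exp_mul, div_mul_cancel₀ x ha.ne']
  rw [Real.exp_neg, Real.rpow_neg (by positivity)]
  gcongr

lemma two_rpow_neg_mul_le {δ x : ℝ} (hδ : 0 < δ) (hx : 0 < x) :
    (2 : ℝ) ^ (-(δ * x)) ≤ 2 / (δ * x) := by
  have hlog : 1 / 2 < Real.log 2 := by linarith [Real.log_two_gt_d9]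
  calc (2 : ℝ) ^ (-(δ * x)) = Real.exp (-(Real.log 2 * (δ * x))) := by
        rw [Real.rpow_def_of_pos two_pos, mul_neg]
    _ ≤ (Real.log 2 * (δ * x) / 1) ^ (-1 : ℝ) := exp_neg_le_rpow_neg one_pos (by positivity)
    _ = (Real.log 2 * (δ * x))⁻¹ := by rw [div_one, Real.rpow_neg_one]
    _ ≤ (1 / 2 * (δ * x))⁻¹ := by gcongr
    _ = 2 / (δ * x) := by field_simp

end ElementaryBounds

section PrimePowerSums

open Finset

lemma pow_card_le_four_pow_of_primes {S : Finset ℕ} {n m : ℕ}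
    (hS : ∀ p ∈ S, p.Prime ∧ n ≤ p ∧ p ≤ m) : n ^ #S ≤ 4 ^ m := by
  calc n ^ #S ≤ ∏ p ∈ S, p := pow_card_le_prod _ _ _ fun p hp ↦ (hS p hp).2.1
    _ ≤ primorial m := by
      refine prod_le_prod_of_subset_of_one_le' (fun p hp ↦ ?_) (fun p hp _ ↦ ?_)
      · exact mem_filter.2 ⟨mem_range_succ_iff.2 (hS p hp).2.2, (hS p hp).1⟩
      · exact (mem_filter.1 hp).2.one_le
    _ ≤ 4 ^ m := primorial_le_four_pow m

lemma mul_card_le_of_primes_log_eq {S : Finset ℕ} {i : ℕ}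
    (hS : ∀ p ∈ S, p.Prime ∧ Nat.log 2 p = i) : i * #S ≤ 2 ^ (i + 2) := by
  have hdyadic : ∀ p ∈ S, p.Prime ∧ 2 ^ i ≤ p ∧ p ≤ 2 ^ (i + 1) := by
    intro p hp
    obtain ⟨hprime, rfl⟩ := hS p hp
    exact ⟨hprime, Nat.pow_log_le_self 2 hprime.ne_zero,
      (Nat.lt_pow_succ_log_self one_lt_two p).le⟩
  have hpow : 2 ^ (i * #S) ≤ 2 ^ (2 ^ (i + 2)) := by
    calc 2 ^ (i * #S) = (2 ^ i) ^ #S := pow_mul 2 i _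
      _ ≤ 4 ^ 2 ^ (i + 1) := pow_card_le_four_pow_of_primes hdyadic
      _ = 2 ^ (2 ^ (i + 2)) := by rw [show 4 = 2 ^ 2 from rfl, ← pow_mul, ← pow_succ']
  exact (Nat.pow_le_pow_iff_right one_lt_two).1 hpow

lemma sum_rpow_neg_primes_log_eq_le {s : ℝ} (hs : 0 ≤ s) {S : Finset ℕ} {i j : ℕ} (hj : 1 ≤ j)
    (hji : j ≤ i) (hS : ∀ p ∈ S, p.Prime ∧ Nat.log 2 p = i) :
    ∑ p ∈ S, (p : ℝ) ^ (-s) ≤ 4 / j * ((2 : ℝ) ^ (1 - s)) ^ i := by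
  have hj' : (0 : ℝ) < j := by exact_mod_cast hj
  have hterm : ∀ p ∈ S, (p : ℝ) ^ (-s) ≤ ((2 : ℝ) ^ i) ^ (-s) := by
    intro p hp
    obtain ⟨hprime, rfl⟩ := hS p hp
    refine Real.rpow_le_rpow_of_nonpos (by positivity) ?_ (neg_nonpos.2 hs)
    exact_mod_cast Nat.pow_log_le_self 2 hprime.ne_zero
  have hcard : (#S : ℝ) ≤ 4 / j * 2 ^ i := by
    rw [div_mul_eq_mul_div, le_div_iff₀' hj']
    have : j * #S ≤ 4 * 2 ^ i := by
      calc j * #S ≤ i * #S := by gcongr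
        _ ≤ 2 ^ (i + 2) := mul_card_le_of_primes_log_eq hS
        _ = 4 * 2 ^ i := by ring
    exact_mod_cast this
  calc ∑ p ∈ S, (p : ℝ) ^ (-s) ≤ #S • ((2 : ℝ) ^ i) ^ (-s) := sum_le_card_nsmul S _ _ hterm
    _ ≤ 4 / j * 2 ^ i * ((2 : ℝ) ^ i) ^ (-s) := by rw [nsmul_eq_mul]; gcongr
    _ = 4 / j * ((2 : ℝ) ^ (1 - s)) ^ i := by
      rw [mul_assoc, Real.rpow_sub two_pos, Real.rpow_one, div_pow, Real.rpow_neg (by positivity),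
        Real.rpow_pow_comm zero_le_two, ← div_eq_mul_inv]

lemma sum_rpow_neg_primes_gt_le {s : ℝ} (hs : 1 < s) {S : Finset ℕ} {j : ℕ} (hj : 1 ≤ j)
    (hS : ∀ p ∈ S, p.Prime ∧ 2 ^ j < p) :
    ∑ p ∈ S, (p : ℝ) ^ (-s) ≤ 4 / (1 - 2 ^ (1 - s)) * ((2 : ℝ) ^ (-((s - 1) * j)) / j) := by
  set r : ℝ := 2 ^ (1 - s)
  have hr : r < 1 := Real.rpow_lt_one_of_one_lt_of_neg one_lt_two (by linarith)
  have hlog : ∀ p ∈ S, Nat.log 2 p ∈ Ico j (S.sup (Nat.log 2) + 1) := fun p hp ↦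
    mem_Ico.2 ⟨Nat.le_log_of_pow_le one_lt_two (hS p hp).2.le,
      Nat.lt_succ_of_le (le_sup (f := Nat.log 2) hp)⟩
  calc ∑ p ∈ S, (p : ℝ) ^ (-s)
      = ∑ i ∈ Ico j (S.sup (Nat.log 2) + 1), ∑ p ∈ S with Nat.log 2 p = i, (p : ℝ) ^ (-s) :=
        (sum_fiberwise_of_maps_to hlog _).symm
    _ ≤ ∑ i ∈ Ico j (S.sup (Nat.log 2) + 1), 4 / j * r ^ i := by
      refine sum_le_sum fun i hi ↦ sum_rpow_neg_primes_log_eq_le (by linarith) hj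
        (mem_Ico.1 hi).1 fun p hp ↦ ?_
      exact ⟨(hS p (mem_filter.1 hp).1).1, (mem_filter.1 hp).2⟩
    _ ≤ 4 / j * (r ^ j / (1 - r)) := by
      rw [← mul_sum]
      gcongr
      exact geom_sum_Ico_le_of_lt_one (by positivity) hr
    _ = 4 / (1 - r) * ((2 : ℝ) ^ (-((s - 1) * j)) / j) := by
      rw [← Real.rpow_mul_natCast zero_le_two, show (1 - s) * j = -((s - 1) * j) by ring]
      ring

lemma summable_rpow_neg_nontrivial_primePow {θ : ℝ} (hθ : 1 / 2 < θ) :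
    Summable fun n : {n : ℕ // IsPrimePow n ∧ ¬ n.Prime} ↦ (n : ℝ) ^ (-θ) := by
  let g : ℕ × ℕ → ℝ := fun x ↦ (((x.1 + 2) ^ (x.2 + 2) : ℕ) : ℝ) ^ (-θ)
  have hg : Summable g := by
    have hbase : Summable fun p : ℕ ↦ ((p + 2 : ℕ) : ℝ) ^ (-(2 * θ)) :=
      (summable_nat_add_iff 2).2 (Real.summable_nat_rpow.2 (by linarith))
    have hexp : Summable fun a : ℕ ↦ ((2 : ℝ) ^ (-θ)) ^ a :=
      summable_geometric_of_lt_one (by positivity)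
        (Real.rpow_lt_one_of_one_lt_of_neg one_lt_two (by linarith))
    refine (hbase.mul_of_nonneg hexp (fun _ ↦ by positivity) fun _ ↦ by positivity).of_nonneg_of_le
      (fun _ ↦ by positivity) fun ⟨p, a⟩ ↦ ?_
    calc g (p, a) = ((p + 2 : ℕ) : ℝ) ^ (-(2 * θ)) * (((p + 2 : ℕ) : ℝ) ^ (-θ)) ^ a := by
          simp only [g]
          rw [Nat.cast_pow, ← Real.rpow_natCast, ← Real.rpow_mul (by positivity),
            ← Real.rpow_mul_natCast (by positivity), ← Real.rpow_add (by positivity)]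
          push_cast
          ring_nf
      _ ≤ ((p + 2 : ℕ) : ℝ) ^ (-(2 * θ)) * ((2 : ℝ) ^ (-θ)) ^ a := by
          gcongr ?_ * ?_ ^ a
          refine Real.rpow_le_rpow_of_nonpos two_pos ?_ (by linarith)
          push_cast
          linarith [p.cast_nonneg (α := ℝ)]
  have hparam : ∀ n : {n : ℕ // IsPrimePow n ∧ ¬ n.Prime},
      ∃ x : ℕ × ℕ, (x.1 + 2) ^ (x.2 + 2) = (n : ℕ) := by
    rintro ⟨n, hn, hn'⟩
    obtain ⟨p, a, hp, ha, rfl⟩ := (isPrimePow_nat_iff n).1 hn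
    have ha1 : a ≠ 1 := by rintro rfl; exact hn' (by rwa [pow_one])
    exact ⟨(p - 2, a - 2), by simp only [Nat.sub_add_cancel hp.two_le,
      Nat.sub_add_cancel (show 2 ≤ a by omega)]⟩
  choose x hx using hparam
  have hinj : Function.Injective x := fun m n h ↦ Subtype.ext (by rw [← hx m, ← hx n, h])
  exact (hg.comp_injective hinj).congr fun n ↦ by simp only [g, Function.comp_apply, hx]

lemma exists_sum_rpow_neg_nontrivial_primePow_le {s : ℝ} (hs : 1 < s) :
    ∃ C : ℝ, 0 ≤ C ∧ ∀ (j : ℕ) (S : Finset ℕ), 1 ≤ j →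
      (∀ n ∈ S, (IsPrimePow n ∧ ¬ n.Prime) ∧ 2 ^ j < n) →
      ∑ n ∈ S, (n : ℝ) ^ (-s) ≤ C * ((2 : ℝ) ^ (-((s - 1) * j)) / j) := by
  set Z := ∑' n : {n : ℕ // IsPrimePow n ∧ ¬ n.Prime}, (n : ℝ) ^ (-(3 / 4) : ℝ)
  have hZ0 : 0 ≤ Z := tsum_nonneg fun _ ↦ by positivity
  -- The exponent `3 / 4` lies in `(1 / 2, 1)`: the series still converges, and the surplus
  -- `2 ^ (-j / 4)` more than pays for the factor `1 / j`.
  refine ⟨8 * Z, mul_nonneg (by norm_num) hZ0, fun j S hj hS ↦ ?_⟩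
  have hj' : (0 : ℝ) < j := by exact_mod_cast hj
  have hsum : ∑ n ∈ S, (n : ℝ) ^ (-(3 / 4) : ℝ) ≤ Z := by
    rw [← sum_subtype_of_mem _ fun n hn ↦ (hS n hn).1]
    exact (summable_rpow_neg_nontrivial_primePow (by norm_num)).sum_le_tsum _
      fun _ _ ↦ by positivity
  have hterm : ∀ n ∈ S, (n : ℝ) ^ (-s) ≤
      (n : ℝ) ^ (-(3 / 4) : ℝ) * ((2 : ℝ) ^ j) ^ (-(s - 3 / 4)) := by
    intro n hn
    have hjn : (2 : ℝ) ^ j ≤ n := by exact_mod_cast (hS n hn).2.le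
    have hn0 : (0 : ℝ) < n := lt_of_lt_of_le (by positivity) hjn
    calc (n : ℝ) ^ (-s) = (n : ℝ) ^ (-(3 / 4) : ℝ) * (n : ℝ) ^ (-(s - 3 / 4)) := by
          rw [← Real.rpow_add hn0]; ring_nf
      _ ≤ _ := by
          exact mul_le_mul_of_nonneg_left
            (Real.rpow_le_rpow_of_nonpos (by positivity) hjn (by linarith)) (by positivity)
  calc ∑ n ∈ S, (n : ℝ) ^ (-s)
      ≤ (∑ n ∈ S, (n : ℝ) ^ (-(3 / 4) : ℝ)) * ((2 : ℝ) ^ j) ^ (-(s - 3 / 4)) := by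
        rw [sum_mul]; exact sum_le_sum hterm
    _ ≤ Z * ((2 : ℝ) ^ j) ^ (-(s - 3 / 4)) := by gcongr
    _ = Z * ((2 : ℝ) ^ (-((s - 1) * j)) * 2 ^ (-(1 / 4 * j) : ℝ)) := by
        rw [← Real.rpow_natCast_mul zero_le_two, ← Real.rpow_add two_pos]; ring_nf
    _ ≤ Z * ((2 : ℝ) ^ (-((s - 1) * j)) * (2 / (1 / 4 * j))) := by
        gcongr; exact two_rpow_neg_mul_le (by norm_num) hj'
    _ = 8 * Z * ((2 : ℝ) ^ (-((s - 1) * j)) / j) := by field_simp; ring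

lemma exists_sum_rpow_neg_primePow_le {s : ℝ} (hs : 1 < s) :
    ∃ C : ℝ, 0 ≤ C ∧ ∀ (j : ℕ) (S : Finset ℕ), 1 ≤ j → (∀ n ∈ S, IsPrimePow n ∧ 2 ^ j < n) →
      ∑ n ∈ S, (n : ℝ) ^ (-s) ≤ C * ((2 : ℝ) ^ (-((s - 1) * j)) / j) := by
  obtain ⟨C, hC, hle⟩ := exists_sum_rpow_neg_nontrivial_primePow_le hs
  have hr : (2 : ℝ) ^ (1 - s) < 1 := Real.rpow_lt_one_of_one_lt_of_neg one_lt_two (by linarith)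
  refine ⟨4 / (1 - 2 ^ (1 - s)) + C, add_nonneg (div_nonneg zero_le_four (by linarith)) hC,
    fun j S hj hS ↦ ?_⟩
  rw [← sum_filter_add_sum_filter_not S Nat.Prime, add_mul]
  refine add_le_add (sum_rpow_neg_primes_gt_le hs hj fun p hp ↦ ?_) (hle j _ hj fun n hn ↦ ?_)
  · rw [mem_filter] at hp
    exact ⟨hp.2, (hS p hp.1).2⟩
  · rw [mem_filter] at hn
    exact ⟨⟨(hS n hn.1).1, hn.2⟩, (hS n hn.1).2⟩

end PrimePowerSums

section DivisorsOfQlcm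

open Finset

lemma qlcm_pos (j : ℕ) : 0 < qlcm j := by
  refine Nat.pos_of_ne_zero fun h ↦ ?_
  obtain ⟨n, hn, hn0⟩ := Finset.lcm_eq_zero_iff.1 h
  exact (Nat.one_le_iff_ne_zero.1 (mem_Icc.1 hn).1) hn0

lemma exists_primePow_dvd_of_not_dvd_qlcm {j q : ℕ} (hq : ¬ q ∣ qlcm j) :
    ∃ n, (IsPrimePow n ∧ 2 ^ j < n) ∧ n ∣ q := by
  rw [Nat.dvd_iff_prime_pow_dvd_dvd] at hq
  push Not at hq
  obtain ⟨p, a, hp, hdvd, hndvd⟩ := hq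
  have ha : a ≠ 0 := by rintro rfl; exact hndvd (by rw [pow_zero]; exact one_dvd _)
  refine ⟨p ^ a, ⟨hp.isPrimePow.pow ha, ?_⟩, hdvd⟩
  by_contra! hle
  exact hndvd (dvd_lcm (f := id) (mem_Icc.2 ⟨Nat.pow_pos hp.pos, hle⟩))

lemma sum_rpow_neg_le_of_forall_dvd {s : ℝ} (hs : 1 < s) {n : ℕ} {F : Finset ℕ}
    (hF : ∀ q ∈ F, n ∣ q) :
    ∑ q ∈ F, (q : ℝ) ^ (-s) ≤ (n : ℝ) ^ (-s) * ∑' m : ℕ, (m : ℝ) ^ (-s) := by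
  have hinj : Set.InjOn (fun q ↦ q / n) F := fun a ha b hb h ↦ by
    rw [← Nat.mul_div_cancel' (hF a ha), ← Nat.mul_div_cancel' (hF b hb)]
    exact congrArg (n * ·) h
  have hfactor : ∀ q ∈ F, (q : ℝ) ^ (-s) = (n : ℝ) ^ (-s) * ((q / n : ℕ) : ℝ) ^ (-s) :=
    fun q hq ↦ by
      rw [← Real.mul_rpow (by positivity) (by positivity), ← Nat.cast_mul,
        Nat.mul_div_cancel' (hF q hq)]
  rw [sum_congr rfl hfactor, ← mul_sum, ← sum_image (f := fun m : ℕ ↦ (m : ℝ) ^ (-s)) hinj]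
  gcongr
  exact (Real.summable_nat_rpow.2 (by linarith)).sum_le_tsum _ fun _ _ ↦ by positivity

lemma exists_sum_rpow_neg_not_dvd_qlcm_le {s : ℝ} (hs : 1 < s) :
    ∃ C : ℝ, 0 ≤ C ∧ ∀ (j : ℕ) (F : Finset ℕ), 1 ≤ j → (∀ q ∈ F, ¬ q ∣ qlcm j) →
      ∑ q ∈ F, (q : ℝ) ^ (-s) ≤ C * ((2 : ℝ) ^ (-((s - 1) * j)) / j) := by
  obtain ⟨C, hC, hle⟩ := exists_sum_rpow_neg_primePow_le hs
  set Z := ∑' m : ℕ, (m : ℝ) ^ (-s)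
  have hZ : 0 ≤ Z := tsum_nonneg fun _ ↦ by positivity
  refine ⟨C * Z, mul_nonneg hC hZ, fun j F hj hF ↦ ?_⟩
  choose! D hD hdvd using fun q (hq : q ∈ F) ↦ exists_primePow_dvd_of_not_dvd_qlcm (hF q hq)
  calc ∑ q ∈ F, (q : ℝ) ^ (-s) = ∑ n ∈ F.image D, ∑ q ∈ F with D q = n, (q : ℝ) ^ (-s) :=
        (sum_fiberwise_of_maps_to (fun q hq ↦ mem_image_of_mem D hq) _).symm
    _ ≤ ∑ n ∈ F.image D, (n : ℝ) ^ (-s) * Z := by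
        refine sum_le_sum fun n _ ↦ sum_rpow_neg_le_of_forall_dvd hs fun q hq ↦ ?_
        obtain ⟨hqF, rfl⟩ := mem_filter.1 hq
        exact hdvd q hqF
    _ ≤ C * ((2 : ℝ) ^ (-((s - 1) * j)) / j) * Z := by
        rw [← sum_mul]
        gcongr
        exact hle j _ hj (forall_mem_image.2 hD)
    _ = C * Z * ((2 : ℝ) ^ (-((s - 1) * j)) / j) := by ring

/-- The factor gained on the major arcs around fractions of denominator `q` when `α` stays away
from `Ω_{j,k}`: it is `2^{-σj}` if `q` divides `q_j`, and there is no gain otherwise. -/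
def divisorGain (σ : ℝ) (j q : ℕ) : ℝ := if q ∣ qlcm j then 2 ^ (-(σ * j)) else 1

lemma divisorGain_nonneg (σ : ℝ) (j q : ℕ) : 0 ≤ divisorGain σ j q := by
  unfold divisorGain
  split_ifs <;> positivity

lemma exists_sum_rpow_neg_mul_divisorGain_le {s σ : ℝ} (hs : 1 < s) (hσ : s - 1 < σ) :
    ∃ C : ℝ, 0 ≤ C ∧ ∀ (j : ℕ) (F : Finset ℕ), 1 ≤ j →
      ∑ q ∈ F, (q : ℝ) ^ (-s) * divisorGain σ j q ≤ C * ((2 : ℝ) ^ (-((s - 1) * j)) / j) := by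
  obtain ⟨C, hC, hle⟩ := exists_sum_rpow_neg_not_dvd_qlcm_le hs
  set Z := ∑' m : ℕ, (m : ℝ) ^ (-s)
  have hZ : 0 ≤ Z := tsum_nonneg fun _ ↦ by positivity
  set δ := σ - (s - 1)
  have hδ : 0 < δ := sub_pos.2 hσ
  refine ⟨Z * (2 / δ) + C, add_nonneg (mul_nonneg hZ (by positivity)) hC, fun j F hj ↦ ?_⟩
  have hj' : (0 : ℝ) < j := by exact_mod_cast hj
  have hgain : (2 : ℝ) ^ (-(σ * j)) ≤ 2 / δ * ((2 : ℝ) ^ (-((s - 1) * j)) / j) := by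
    calc (2 : ℝ) ^ (-(σ * j)) = 2 ^ (-(δ * j)) * 2 ^ (-((s - 1) * j)) := by
          rw [← Real.rpow_add two_pos]; simp only [δ]; ring_nf
      _ ≤ 2 / (δ * j) * 2 ^ (-((s - 1) * j)) := by gcongr; exact two_rpow_neg_mul_le hδ hj'
      _ = _ := by field_simp
  rw [← sum_filter_add_sum_filter_not F (· ∣ qlcm j), add_mul]
  refine add_le_add ?_ ?_
  · calc ∑ q ∈ F with q ∣ qlcm j, (q : ℝ) ^ (-s) * divisorGain σ j q
        = (∑ q ∈ F with q ∣ qlcm j, (q : ℝ) ^ (-s)) * 2 ^ (-(σ * j)) := by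
          rw [sum_mul]
          exact sum_congr rfl fun q hq ↦ by rw [divisorGain, if_pos (mem_filter.1 hq).2]
      _ ≤ Z * (2 / δ * ((2 : ℝ) ^ (-((s - 1) * j)) / j)) := by
          gcongr
          exact (Real.summable_nat_rpow.2 (by linarith)).sum_le_tsum _ fun _ _ ↦ by positivity
      _ = Z * (2 / δ) * ((2 : ℝ) ^ (-((s - 1) * j)) / j) := by ring
  · calc ∑ q ∈ F with ¬ q ∣ qlcm j, (q : ℝ) ^ (-s) * divisorGain σ j q
        = ∑ q ∈ F with ¬ q ∣ qlcm j, (q : ℝ) ^ (-s) :=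
          sum_congr rfl fun q hq ↦ by rw [divisorGain, if_neg (mem_filter.1 hq).2, mul_one]
      _ ≤ C * ((2 : ℝ) ^ (-((s - 1) * j)) / j) := hle j _ hj fun q hq ↦ (mem_filter.1 hq).2

end DivisorsOfQlcm

section GaussSums

open Finset ZMod ComplexConjugate

lemma sum_quadratic_mul_conj {R : Type*} [CommRing R] [Fintype R] (ψ : AddChar R ℂ) (a b : R) :
    (∑ r, ψ (a * r ^ 2 + b * r)) * conj (∑ r, ψ (a * r ^ 2 + b * r)) =
      ∑ h, ψ (a * h ^ 2 + b * h) * ∑ s, ψ (s * (2 * a * h)) := by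
  calc (∑ r, ψ (a * r ^ 2 + b * r)) * conj (∑ r, ψ (a * r ^ 2 + b * r))
      = ∑ s, ∑ r, ψ (a * r ^ 2 + b * r - (a * s ^ 2 + b * s)) := by
        rw [map_sum, sum_mul_sum, sum_comm]
        simp only [← AddChar.map_neg_eq_conj, ← AddChar.map_add_eq_mul, sub_eq_add_neg]
    _ = ∑ s, ∑ h, ψ (a * h ^ 2 + b * h + s * (2 * a * h)) := by
        refine sum_congr rfl fun s _ ↦ ?_
        rw [← Equiv.sum_comp (Equiv.addRight s)]
        refine sum_congr rfl fun h _ ↦ congrArg ψ ?_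
        rw [Equiv.coe_addRight]
        ring
    _ = ∑ h, ψ (a * h ^ 2 + b * h) * ∑ s, ψ (s * (2 * a * h)) := by
        rw [sum_comm]
        simp only [AddChar.map_add_eq_mul, mul_sum]

lemma sq_norm_sum_quadratic_le {R : Type*} [CommRing R] [Fintype R] [DecidableEq R]
    {ψ : AddChar R ℂ} (hψ : ψ.IsPrimitive) {a : R} (ha : IsUnit a) (b : R) :
    ‖∑ r, ψ (a * r ^ 2 + b * r)‖ ^ 2 ≤ Fintype.card R * #{h : R | 2 • h = 0} := by
  have hunit (h : R) : 2 * a * h = 0 ↔ 2 • h = 0 := by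
    rw [show 2 * a * h = a * (2 • h) by rw [nsmul_eq_mul]; push_cast; ring, ha.mul_right_eq_zero]
  calc ‖∑ r, ψ (a * r ^ 2 + b * r)‖ ^ 2
      = ‖∑ h, ψ (a * h ^ 2 + b * h) * ∑ s, ψ (s * (2 * a * h))‖ := by
        rw [← sum_quadratic_mul_conj, norm_mul, RCLike.norm_conj, sq]
    _ ≤ ∑ h, ‖ψ (a * h ^ 2 + b * h) * ∑ s, ψ (s * (2 * a * h))‖ := norm_sum_le _ _
    _ = ∑ h : R, if 2 • h = 0 then (Fintype.card R : ℝ) else 0 := by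
        refine sum_congr rfl fun h _ ↦ ?_
        rw [norm_mul, AddChar.norm_apply, one_mul, AddChar.sum_mulShift _ hψ]
        simp only [hunit]
        split_ifs <;> simp
    _ = Fintype.card R * #{h : R | 2 • h = 0} := by
        rw [← sum_filter, sum_const, nsmul_eq_mul, mul_comm]

lemma norm_dft_quadratic_le {q : ℕ} [NeZero q] {a : ZMod q} (ha : IsUnit a) (k : ZMod q) :
    ‖𝓕 (fun r : ZMod q ↦ (stdAddChar (a * r ^ 2) : ℂ)) k‖ ≤ √(2 * q) := by
  have hcard : (#{h : ZMod q | 2 • h = 0} : ℝ) ≤ 2 := by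
    exact_mod_cast IsAddCyclic.card_nsmul_eq_zero_le (α := ZMod q) two_pos
  have hdft : 𝓕 (fun r : ZMod q ↦ (stdAddChar (a * r ^ 2) : ℂ)) k =
      ∑ r, stdAddChar (a * r ^ 2 + -k * r) := by
    rw [dft_apply]
    refine sum_congr rfl fun r _ ↦ ?_
    rw [smul_eq_mul, ← AddChar.map_add_eq_mul]
    congr 1
    ring
  rw [hdft]
  refine Real.le_sqrt_of_sq_le ((sq_norm_sum_quadratic_le (isPrimitive_stdAddChar q) ha _).trans ?_)
  rw [ZMod.card, mul_comm]
  gcongr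

end GaussSums

section LatticeGaussian

/-- The sum of the Gaussian `x ↦ exp (-c * x ^ 2)` over the translate `ℤ + y` of the integer
lattice. -/
def latticeGaussian (c y : ℝ) : ℝ := ∑' n : ℤ, Real.exp (-c * (n + y) ^ 2)

lemma latticeGaussian_nonneg (c y : ℝ) : 0 ≤ latticeGaussian c y :=
  tsum_nonneg fun _ ↦ Real.exp_nonneg _

lemma summable_exp_neg_mul_int_sq {c : ℝ} (hc : 0 < c) :
    Summable fun n : ℤ ↦ Real.exp (-c * n ^ 2) := by
  have hsum : Summable (jacobiTheta₂_term · 0 (↑(c / π) * Complex.I)) := by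
    rw [summable_jacobiTheta₂_term_iff, Complex.im_ofReal_mul, Complex.I_im]
    positivity
  refine hsum.norm.congr fun n ↦ ?_
  rw [norm_jacobiTheta₂_term, Complex.im_ofReal_mul, Complex.I_im, Complex.zero_im]
  congr 1
  field_simp
  ring

lemma exp_neg_mul_add_sq_le {c : ℝ} (hc : 0 ≤ c) (x y : ℝ) :
    Real.exp (-c * (x + y) ^ 2) ≤ Real.exp (c * y ^ 2) * Real.exp (-(c / 2) * x ^ 2) := by
  rw [← Real.exp_add, Real.exp_le_exp]
  nlinarith [mul_nonneg hc (sq_nonneg (x + 2 * y))]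

lemma summable_latticeGaussian {c : ℝ} (hc : 0 < c) (y : ℝ) :
    Summable fun n : ℤ ↦ Real.exp (-c * (n + y) ^ 2) :=
  .of_nonneg_of_le (fun _ ↦ Real.exp_nonneg _) (fun n ↦ exp_neg_mul_add_sq_le hc.le n y)
    ((summable_exp_neg_mul_int_sq (half_pos hc)).mul_left _)

lemma latticeGaussian_le_of_le {c c' : ℝ} (hc : 0 < c) (hcc' : c ≤ c') (y : ℝ) :
    latticeGaussian c' y ≤ latticeGaussian c y := by
  refine (summable_latticeGaussian (hc.trans_le hcc') y).tsum_le_tsum (fun n ↦ ?_)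
    (summable_latticeGaussian hc y)
  gcongr

lemma latticeGaussian_add_int (c y : ℝ) (n : ℤ) :
    latticeGaussian c (y + n) = latticeGaussian c y := by
  unfold latticeGaussian
  rw [← (Equiv.addRight n).tsum_eq fun m : ℤ ↦ Real.exp (-c * (m + y) ^ 2)]
  refine tsum_congr fun m ↦ ?_
  rw [Equiv.coe_addRight, Int.cast_add, add_assoc, add_comm y]

lemma exists_latticeGaussian_le {c₀ : ℝ} (hc₀ : 0 < c₀) :
    ∃ K, 0 < K ∧ ∀ c y, c₀ ≤ c → latticeGaussian c y ≤ K := by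
  have hsum := summable_exp_neg_mul_int_sq (half_pos hc₀)
  refine ⟨Real.exp c₀ * ∑' n : ℤ, Real.exp (-(c₀ / 2) * n ^ 2),
    mul_pos (Real.exp_pos _) (hsum.tsum_pos (fun _ ↦ Real.exp_nonneg _) 0 (Real.exp_pos _)),
    fun c y hc ↦ ?_⟩
  have hfract : Int.fract y ^ 2 ≤ 1 :=
    pow_le_one₀ (Int.fract_nonneg y) (Int.fract_lt_one y).le
  calc latticeGaussian c y ≤ latticeGaussian c₀ y := latticeGaussian_le_of_le hc₀ hc y
    _ = latticeGaussian c₀ (Int.fract y) := by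
        rw [← latticeGaussian_add_int c₀ (Int.fract y) ⌊y⌋, Int.fract_add_floor]
    _ ≤ ∑' n : ℤ, Real.exp (c₀ * Int.fract y ^ 2) * Real.exp (-(c₀ / 2) * n ^ 2) :=
        (summable_latticeGaussian hc₀ _).tsum_le_tsum
          (fun n ↦ exp_neg_mul_add_sq_le hc₀.le n _) (hsum.mul_left _)
    _ ≤ Real.exp c₀ * ∑' n : ℤ, Real.exp (-(c₀ / 2) * n ^ 2) := by
        rw [tsum_mul_left]
        gcongr
        exact mul_le_of_le_one_right hc₀.le hfract

lemma latticeGaussian_le_of_forall_le_abs {c y D : ℝ} (hc : 0 < c) (hD : 0 ≤ D)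
    (hy : ∀ n : ℤ, D ≤ |n + y|) :
    latticeGaussian c y ≤ Real.exp (-(c / 2 * D ^ 2)) * latticeGaussian (c / 2) y := by
  unfold latticeGaussian
  rw [← tsum_mul_left]
  refine (summable_latticeGaussian hc y).tsum_le_tsum (fun n ↦ ?_)
    ((summable_latticeGaussian (half_pos hc) y).mul_left _)
  rw [← Real.exp_add, Real.exp_le_exp]
  have hsq : D ^ 2 ≤ (n + y) ^ 2 := by
    rw [← sq_abs (n + y)]
    exact pow_le_pow_left₀ hD (hy n) 2
  nlinarith

lemma sum_latticeGaussian_add_div (q : ℕ) [NeZero q] {c : ℝ} (hc : 0 < c) (x : ℝ) :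
    ∑ l : ZMod q, latticeGaussian c (x + l.val / q) = latticeGaussian (c / q ^ 2) (q * x) := by
  have hq : (q : ℝ) ≠ 0 := NeZero.ne _
  have hsum := (Int.divModEquiv q).symm.summable_iff.2
    (summable_latticeGaussian (c := c / q ^ 2) (by positivity) (q * x))
  have hval : ∑ l : ZMod q, latticeGaussian c (x + l.val / q) =
      ∑ l : Fin q, latticeGaussian c (x + (l : ℕ) / q) := by
    obtain ⟨n, rfl⟩ := Nat.exists_eq_succ_of_ne_zero (NeZero.ne q)
    rfl
  unfold latticeGaussian at hval ⊢
  rw [hval, ← (Int.divModEquiv q).symm.tsum_eq]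
  rw [show ∑' z, Real.exp _ = _ from hsum.tsum_prod,
    ← Summable.tsum_finsetSum fun l _ ↦ summable_latticeGaussian hc _]
  refine tsum_congr fun n ↦ ?_
  rw [tsum_fintype]
  refine Finset.sum_congr rfl fun l _ ↦ congrArg Real.exp ?_
  rw [Int.divModEquiv_symm_apply]
  push_cast
  field_simp
  ring

end LatticeGaussian

section JacobiTheta

open Complex ZMod

lemma norm_jacobiTheta₂_ofReal_le {τ : ℂ} (hτ : 0 < τ.im) (x : ℝ) :
    ‖jacobiTheta₂ x τ‖ ≤
      ‖τ‖ ^ (-(1 / 2) : ℝ) * latticeGaussian (π * (τ.im / ‖τ‖ ^ 2)) x := by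
  have hτ0 : 0 < ‖τ‖ := norm_pos_iff.2 fun h ↦ by simp [h] at hτ
  have hre : 0 < (-I * τ).re := by simpa using hτ
  have hnorm : ‖-I * τ‖ = ‖τ‖ := by rw [norm_mul, norm_neg, norm_I, one_mul]
  have hsum := summable_latticeGaussian (c := π * (τ.im / ‖τ‖ ^ 2)) (by positivity) x
  have hpoisson : jacobiTheta₂ x τ =
      1 / (-I * τ) ^ (1 / 2 : ℂ) * ∑' n : ℤ, cexp (-π / (-I * τ) * (n + I * (-I * x)) ^ 2) := by
    rw [← tsum_exp_neg_quadratic hre, ← jacobiTheta₂_neg_left]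
    refine tsum_congr fun n ↦ congrArg cexp ?_
    ring
  have hterm (n : ℤ) : ‖cexp (-π / (-I * τ) * (n + I * (-I * x)) ^ 2)‖ =
      Real.exp (-(π * (τ.im / ‖τ‖ ^ 2)) * (n + x) ^ 2) := by
    have hexp : -π / (-I * τ) * (n + I * (-I * x)) ^ 2 =
        ((-π * (n + x) ^ 2 : ℝ) : ℂ) * (-I * τ)⁻¹ := by
      rw [show I * (-I * x) = x by linear_combination (-x : ℂ) * I_mul_I]
      push_cast
      ring
    rw [norm_exp, hexp, re_ofReal_mul, inv_re, normSq_eq_norm_sq, hnorm]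
    congr 1
    simp
    ring
  have hcpow : ‖1 / (-I * τ) ^ (1 / 2 : ℂ)‖ = ‖τ‖ ^ (-(1 / 2) : ℝ) := by
    rw [norm_div, norm_one, show (1 / 2 : ℂ) = ((1 / 2 : ℝ) : ℂ) by push_cast; rfl, norm_cpow_real,
      hnorm, Real.rpow_neg hτ0.le, one_div]
  rw [hpoisson, norm_mul, hcpow]
  gcongr
  exact (norm_tsum_le_tsum_norm (hsum.congr fun n ↦ (hterm n).symm)).trans_eq (tsum_congr hterm)

lemma stdAddChar_mul_jacobiTheta₂_term {q : ℕ} [NeZero q] (l : ZMod q) (n : ℤ) (z τ : ℂ) :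
    stdAddChar (l * (n : ZMod q)) * jacobiTheta₂_term n z τ =
      jacobiTheta₂_term n (z + l.val / q) τ := by
  have hcast : l * (n : ZMod q) = ((l.val * n : ℤ) : ZMod q) := by push_cast; rw [natCast_zmod_val]
  rw [hcast, stdAddChar_coe, jacobiTheta₂_term, jacobiTheta₂_term, ← Complex.exp_add]
  push_cast
  ring_nf

lemma jacobiTheta₂_term_two_mul_div_add {q : ℕ} [NeZero q] (p n : ℤ) (z τ : ℂ) :
    jacobiTheta₂_term n z (2 * (p / q) + τ) =
      stdAddChar ((p : ZMod q) * (n : ZMod q) ^ 2) * jacobiTheta₂_term n z τ := by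
  have hcast : (p : ZMod q) * (n : ZMod q) ^ 2 = ((p * n ^ 2 : ℤ) : ZMod q) := by push_cast; rfl
  rw [hcast, stdAddChar_coe, jacobiTheta₂_term, jacobiTheta₂_term, ← Complex.exp_add]
  push_cast
  ring_nf

lemma tsum_mul_jacobiTheta₂_term {q : ℕ} [NeZero q] (Φ : ZMod q → ℂ) (z : ℂ) {τ : ℂ}
    (hτ : 0 < τ.im) :
    ∑' n : ℤ, Φ n * jacobiTheta₂_term n z τ =
      (q : ℂ)⁻¹ * ∑ l, 𝓕 Φ l * jacobiTheta₂ (z + l.val / q) τ := by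
  have hinv (n : ℤ) : Φ n = (q : ℂ)⁻¹ * ∑ l, stdAddChar (l * (n : ZMod q)) * 𝓕 Φ l := by
    simpa only [smul_eq_mul] using
      (congrFun (dft.symm_apply_apply Φ) n).symm.trans (invDFT_apply (𝓕 Φ) n)
  calc ∑' n : ℤ, Φ n * jacobiTheta₂_term n z τ
      = ∑' n : ℤ, (q : ℂ)⁻¹ * ∑ l, 𝓕 Φ l * jacobiTheta₂_term n (z + l.val / q) τ := by
        refine tsum_congr fun n ↦ ?_
        simp only [hinv n, ← stdAddChar_mul_jacobiTheta₂_term, mul_assoc, Finset.sum_mul]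
        simp only [mul_left_comm]
    _ = (q : ℂ)⁻¹ * ∑ l, 𝓕 Φ l * jacobiTheta₂ (z + l.val / q) τ := by
        rw [tsum_mul_left, Summable.tsum_finsetSum fun l _ ↦
          ((summable_jacobiTheta₂_term_iff _ τ).2 hτ).mul_left _]
        simp only [tsum_mul_left, jacobiTheta₂]

lemma norm_jacobiTheta₂_two_mul_div_add_le {q : ℕ} [NeZero q] {p : ℤ} (hp : IsUnit (p : ZMod q))
    {τ : ℂ} (hτ : 0 < τ.im) (x : ℝ) :
    ‖jacobiTheta₂ x (2 * (p / q) + τ)‖ ≤ √(2 / q) * ‖τ‖ ^ (-(1 / 2) : ℝ) *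
      latticeGaussian (π * (τ.im / ‖τ‖ ^ 2) / q ^ 2) (q * x) := by
  have hτ0 : 0 < ‖τ‖ := norm_pos_iff.2 fun h ↦ by simp [h] at hτ
  have hq : (q : ℝ) ≠ 0 := NeZero.ne _
  have hsqrt : (q : ℝ)⁻¹ * √(2 * q) = √(2 / q) := by
    rw [show (2 * q : ℝ) = 2 / q * q ^ 2 by field_simp, Real.sqrt_mul (by positivity),
      Real.sqrt_sq (by positivity)]
    field_simp
  calc ‖jacobiTheta₂ x (2 * (p / q) + τ)‖
      = ‖(q : ℂ)⁻¹ * ∑ l : ZMod q, 𝓕 (fun r : ZMod q ↦ (stdAddChar ((p : ZMod q) * r ^ 2) : ℂ)) l *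
          jacobiTheta₂ (x + l.val / q) τ‖ := by
        rw [← tsum_mul_jacobiTheta₂_term _ _ hτ, jacobiTheta₂]
        simp only [jacobiTheta₂_term_two_mul_div_add]
    _ ≤ (q : ℝ)⁻¹ * ∑ l : ZMod q, √(2 * q) * (‖τ‖ ^ (-(1 / 2) : ℝ) *
          latticeGaussian (π * (τ.im / ‖τ‖ ^ 2)) (x + l.val / q)) := by
        rw [norm_mul, norm_inv, Complex.norm_natCast]
        gcongr
        refine norm_sum_le_of_le _ fun l _ ↦ ?_
        rw [norm_mul]
        gcongr
        · exact norm_dft_quadratic_le hp l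
        · simpa only [ofReal_add, ofReal_div, ofReal_natCast] using
            norm_jacobiTheta₂_ofReal_le hτ (x + l.val / q)
    _ = _ := by
        rw [← Finset.mul_sum, ← Finset.mul_sum, sum_latticeGaussian_add_div q (by positivity),
          ← mul_assoc, ← mul_assoc, hsqrt]

end JacobiTheta

section ProductOfThetas

open Finset

lemma summable_norm_prod_apply {β R : Type*} [NormedCommRing R] {d : ℕ} {f : Fin d → β → R}
    (hf : ∀ i, Summable fun n ↦ ‖f i n‖) :
    Summable fun m : Fin d → β ↦ ‖∏ i, f i (m i)‖ := by
  induction d with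
  | zero => exact (hasSum_fintype _).summable
  | succ d ih =>
    rw [← (Fin.consEquiv fun _ : Fin (d + 1) ↦ β).summable_iff]
    refine ((hf 0).mul_norm (ih fun i ↦ hf i.succ)).congr fun m ↦ ?_
    simp only [Function.comp_apply, Fin.prod_univ_succ, Fin.consEquiv_apply, Fin.cons_zero,
      Fin.cons_succ]

lemma tsum_prod_apply {β R : Type*} [NormedCommRing R] [CompleteSpace R] {d : ℕ}
    {f : Fin d → β → R} (hf : ∀ i, Summable fun n ↦ ‖f i n‖) :
    ∑' m : Fin d → β, ∏ i, f i (m i) = ∏ i, ∑' n, f i n := by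
  induction d with
  | zero => simp only [univ_eq_empty, prod_empty, tsum_fintype, univ_unique, sum_singleton]
  | succ d ih =>
    rw [Fin.prod_univ_succ, ← ih fun i ↦ hf i.succ,
      tsum_mul_tsum_of_summable_norm (hf 0) (summable_norm_prod_apply fun i ↦ hf i.succ),
      ← (Fin.consEquiv fun _ : Fin (d + 1) ↦ β).tsum_eq]
    simp only [Fin.prod_univ_succ, Fin.consEquiv_apply, Fin.cons_zero, Fin.cons_succ]

lemma sHat_eq_prod_jacobiTheta₂ {d : ℕ} {ε : ℝ} (hε : 0 < ε) (t : ℝ) (α : Fin d → ℝ) :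
    sHat ε t α = ∏ i, jacobiTheta₂ (α i) (2 * (t + Complex.I * ε)) := by
  have him : 0 < (2 * (t + Complex.I * ε) : ℂ).im := by simpa using hε
  simp only [← jacobiTheta₂_neg_left (α _ : ℂ)]
  simp only [jacobiTheta₂]
  rw [sHat, ← tsum_prod_apply
    (f := fun i n ↦ jacobiTheta₂_term n (-(α i : ℂ)) (2 * (t + Complex.I * ε)))
    fun i ↦ ((summable_jacobiTheta₂_term_iff _ _).2 him).norm]
  refine tsum_congr fun m ↦ ?_
  simp only [sFun, nsq, jacobiTheta₂_term]
  rw [← Complex.exp_add, ← Complex.exp_sum, sum_add_distrib, add_comm]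
  push_cast
  simp only [mul_sum, sum_mul]
  congr 2 <;> exact sum_congr rfl fun i _ ↦ by ring

lemma sqrt_two_div_mul_rpow_eq {q ε V T : ℝ} (hq : 0 < q) (hε : 0 < ε) (hV : 0 < V) (hT : 0 ≤ T)
    (h : T ^ 2 = (2 * ε) ^ 2 * V) :
    √(2 / q) * T ^ (-(1 / 2) : ℝ) = (q * ε) ^ (-(1 / 2) : ℝ) * V ^ (-(1 / 4) : ℝ) := by
  have hroot : T ^ (-(1 / 2) : ℝ) = (2 * ε) ^ (-(1 / 2) : ℝ) * V ^ (-(1 / 4) : ℝ) := by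
    rw [show T ^ (-(1 / 2) : ℝ) = (T ^ 2) ^ (-(1 / 4) : ℝ) by
      rw [← Real.rpow_natCast_mul hT]; norm_num, h,
      Real.mul_rpow (by positivity) hV.le, ← Real.rpow_natCast_mul (by positivity)]
    norm_num
  rw [hroot, ← mul_assoc, Real.sqrt_eq_rpow, ← inv_div, Real.inv_rpow (by positivity),
    ← Real.rpow_neg (by positivity), ← Real.mul_rpow (by positivity) (by positivity)]
  congr 2
  field_simp

lemma norm_jacobiTheta₂_le_of_coprime {p q : ℕ} [NeZero q] (hpq : p.Coprime q) {ε : ℝ} (hε : 0 < ε)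
    (t x : ℝ) :
    ‖jacobiTheta₂ x (2 * (t + Complex.I * ε))‖ ≤
      (q * ε) ^ (-(1 / 2) : ℝ) * (1 + ((t - p / q) / ε) ^ 2) ^ (-(1 / 4) : ℝ) *
        latticeGaussian (π / (2 * (q ^ 2 * ε * (1 + ((t - p / q) / ε) ^ 2)))) (q * x) := by
  set V := 1 + ((t - p / q) / ε) ^ 2 with hV
  have hq : 0 < (q : ℝ) := Nat.cast_pos.2 (NeZero.pos q)
  have hV0 : 0 < V := by positivity
  set τ : ℂ := 2 * ((t - p / q : ℝ) + Complex.I * ε)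
  have hre : τ.re = 2 * (t - p / q) := by simp [τ]
  have him : τ.im = 2 * ε := by simp [τ]
  have hnorm : ‖τ‖ ^ 2 = (2 * ε) ^ 2 * V := by
    rw [← Complex.normSq_eq_norm_sq, Complex.normSq_apply, hre, him, hV]
    field_simp
    ring
  have hτ : (2 * (t + Complex.I * ε) : ℂ) = 2 * ((p : ℤ) / q) + τ := by
    simp only [τ]
    push_cast
    ring
  have hunit : IsUnit ((p : ℤ) : ZMod q) := by
    rw [Int.cast_natCast]
    exact (ZMod.isUnit_iff_coprime p q).2 hpq
  have hc : π * (τ.im / ‖τ‖ ^ 2) / q ^ 2 = π / (2 * (q ^ 2 * ε * V)) := by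
    rw [hnorm, him]
    field_simp
  rw [hτ, ← hc, ← sqrt_two_div_mul_rpow_eq hq hε hV0 (norm_nonneg τ) hnorm]
  exact norm_jacobiTheta₂_two_mul_div_add_le hunit (by rw [him]; positivity) x

lemma norm_sHat_le_of_coprime {d p q : ℕ} [NeZero q] (hpq : p.Coprime q) {ε : ℝ} (hε : 0 < ε)
    (t : ℝ) (α : Fin d → ℝ) :
    ‖sHat ε t α‖ ≤ (q * ε) ^ (-(d / 2) : ℝ) * (1 + ((t - p / q) / ε) ^ 2) ^ (-(d / 4) : ℝ) *
      ∏ i, latticeGaussian (π / (2 * (q ^ 2 * ε * (1 + ((t - p / q) / ε) ^ 2)))) (q * α i) := by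
  rw [sHat_eq_prod_jacobiTheta₂ hε, norm_prod]
  refine (prod_le_prod (fun _ _ ↦ norm_nonneg _) fun i _ ↦
    norm_jacobiTheta₂_le_of_coprime hpq hε t (α i)).trans_eq ?_
  rw [prod_mul_distrib, prod_const, card_univ, Fintype.card_fin, mul_pow,
    ← Real.rpow_mul_natCast (by positivity), ← Real.rpow_mul_natCast (by positivity)]
  ring_nf

end ProductOfThetas

section PointwiseBound

open Finset

lemma exists_prod_latticeGaussian_le (ι : Type*) [Fintype ι] {c₀ : ℝ} (hc₀ : 0 < c₀) :
    ∃ C, 0 < C ∧ ∀ (c : ℝ) (y : ι → ℝ), c₀ ≤ c → ∏ i, latticeGaussian c (y i) ≤ C := by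
  obtain ⟨K, hK, hle⟩ := exists_latticeGaussian_le hc₀
  refine ⟨K ^ Fintype.card ι, by positivity, fun c y hc ↦ ?_⟩
  exact (prod_le_prod (fun _ _ ↦ latticeGaussian_nonneg _ _) fun i _ ↦ hle c (y i) hc).trans_eq
    (by rw [prod_const, card_univ])

lemma latticeGaussian_le_rpow_mul {a c y D : ℝ} (ha : 0 < a) (hc : 0 < c) (hD : 0 < D)
    (hy : ∀ n : ℤ, D ≤ |n + y|) :
    latticeGaussian c y ≤ (c * D ^ 2 / (2 * a)) ^ (-a) * latticeGaussian (c / 2) y := by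
  refine (latticeGaussian_le_of_forall_le_abs hc hD.le hy).trans ?_
  gcongr
  · exact latticeGaussian_nonneg _ _
  · refine (exp_neg_le_rpow_neg ha (by positivity)).trans_eq ?_
    congr 1
    field_simp

lemma exists_prod_latticeGaussian_le_rpow (ι : Type*) [Fintype ι] {a c₀ : ℝ} (ha : 0 < a)
    (hc₀ : 0 < c₀) :
    ∃ C, 0 < C ∧ ∀ (c D : ℝ) (y : ι → ℝ) (i : ι), c₀ ≤ c → 0 < D → (∀ n : ℤ, D ≤ |n + y i|) →
      ∏ i, latticeGaussian c (y i) ≤ C * (c * D ^ 2) ^ (-a) := by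
  classical
  obtain ⟨C, hC, hle⟩ := exists_prod_latticeGaussian_le ι (half_pos hc₀)
  refine ⟨C * ((2 * a)⁻¹) ^ (-a), by positivity, fun c D y i hc hD hy ↦ ?_⟩
  have hc0 : 0 < c := hc₀.trans_le hc
  calc ∏ i, latticeGaussian c (y i)
      = latticeGaussian c (y i) * ∏ l ∈ univ.erase i, latticeGaussian c (y l) :=
        (mul_prod_erase _ _ (mem_univ i)).symm
    _ ≤ (c * D ^ 2 / (2 * a)) ^ (-a) * latticeGaussian (c / 2) (y i) *
          ∏ l ∈ univ.erase i, latticeGaussian (c / 2) (y l) := by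
        gcongr with l
        · exact prod_nonneg fun l _ ↦ latticeGaussian_nonneg _ _
        · exact mul_nonneg (by positivity) (latticeGaussian_nonneg _ _)
        · exact latticeGaussian_le_rpow_mul ha hc0 hD hy
        · exact fun l _ ↦ latticeGaussian_nonneg _ _
        · exact latticeGaussian_le_of_le (half_pos hc0) (half_le_self hc0.le) _
    _ = (c * D ^ 2) ^ (-a) * ((2 * a)⁻¹) ^ (-a) * ∏ l, latticeGaussian (c / 2) (y l) := by
        rw [mul_assoc, mul_prod_erase _ (fun l ↦ latticeGaussian (c / 2) (y l)) (mem_univ i),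
          div_eq_mul_inv, Real.mul_rpow (by positivity) (by positivity)]
    _ ≤ (c * D ^ 2) ^ (-a) * ((2 * a)⁻¹) ^ (-a) * C := by
        gcongr
        exact hle _ y (by linarith)
    _ = C * ((2 * a)⁻¹) ^ (-a) * (c * D ^ 2) ^ (-a) := by ring

lemma exists_forall_le_abs_add_of_notMem_OmegaJK {d j k q : ℕ} (hq : q ∣ qlcm j)
    {α : Fin d → ℝ} (hα : α ∉ OmegaJK d j k) :
    ∃ i, ∀ n : ℤ, q * (2 : ℝ) ^ ((j : ℤ) - (k : ℤ)) ≤ |n + q * α i| := by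
  obtain ⟨e, he⟩ := hq
  have hqe : (q : ℝ) * e = qlcm j := by exact_mod_cast he.symm
  have hpos : (0 : ℝ) < q * e := by rw [hqe]; exact_mod_cast qlcm_pos j
  have hq0 : (q : ℝ) ≠ 0 := left_ne_zero_of_mul hpos.ne'
  have he0 : (e : ℝ) ≠ 0 := right_ne_zero_of_mul hpos.ne'
  by_contra! hnear
  choose n hn using hnear
  refine hα ⟨fun i ↦ -(n i * e), fun i ↦ ?_⟩
  have hscale : n i + q * α i = q * (α i - ((-(n i * e) : ℤ) : ℝ) / qlcm j) := by
    rw [← hqe]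
    push_cast
    field_simp
    ring
  have hlt := hn i
  rw [hscale, abs_mul, Nat.abs_cast] at hlt
  exact (lt_of_mul_lt_mul_left hlt q.cast_nonneg).le

lemma gaussianWidth_mul_sq_rpow_neg (a : ℝ) {q V : ℝ} (hq : 0 < q) (hV : 0 < V) (j k : ℕ) :
    (π / (2 * (q ^ 2 * ((2 : ℝ) ^ (2 * k))⁻¹ * V)) *
      (q * (2 : ℝ) ^ ((j : ℤ) - (k : ℤ))) ^ 2) ^ (-a) =
      (π / 2) ^ (-a) * (2 ^ (-(2 * a * j)) * V ^ a) := by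
  have hbase : π / (2 * (q ^ 2 * ((2 : ℝ) ^ (2 * k))⁻¹ * V)) *
      (q * (2 : ℝ) ^ ((j : ℤ) - (k : ℤ))) ^ 2 = π / 2 * 2 ^ (j * 2) / V := by
    rw [zpow_sub₀ two_ne_zero, zpow_natCast, zpow_natCast, pow_mul', pow_mul]
    field_simp
  rw [hbase, Real.div_rpow (by positivity) hV.le, Real.mul_rpow (by positivity) (by positivity),
    Real.rpow_neg hV.le, div_inv_eq_mul, ← Real.rpow_natCast_mul zero_le_two, mul_assoc]
  push_cast
  ring_nf

lemma exists_prod_latticeGaussian_le_divisorGain (d : ℕ) {a : ℝ} (ha : 0 < a) :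
    ∃ C, 0 < C ∧ ∀ (j k q : ℕ) (V : ℝ) (α : Fin d → ℝ), 0 < q → 1 ≤ V →
      q ^ 2 * ((2 : ℝ) ^ (2 * k))⁻¹ * V ≤ 2 → α ∉ OmegaJK d j k →
      ∏ i, latticeGaussian (π / (2 * (q ^ 2 * ((2 : ℝ) ^ (2 * k))⁻¹ * V))) (q * α i) ≤
        C * (divisorGain (2 * a) j q * V ^ a) := by
  obtain ⟨C₁, hC₁, hle₁⟩ := exists_prod_latticeGaussian_le (Fin d) (c₀ := π / 4) (by positivity)
  obtain ⟨C₂, hC₂, hle₂⟩ := exists_prod_latticeGaussian_le_rpow (Fin d) ha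
    (c₀ := π / 4) (by positivity)
  refine ⟨C₁ + C₂ * (π / 2) ^ (-a), by positivity, fun j k q V α hq hV hqV hα ↦ ?_⟩
  have hq' : (0 : ℝ) < q := by exact_mod_cast hq
  have hV0 : 0 < V := by linarith
  set c := π / (2 * (q ^ 2 * ((2 : ℝ) ^ (2 * k))⁻¹ * V)) with hc_def
  have hc : π / 4 ≤ c := by
    rw [hc_def]
    gcongr
    linarith
  by_cases hdvd : q ∣ qlcm j
  · obtain ⟨i, hi⟩ := exists_forall_le_abs_add_of_notMem_OmegaJK hdvd hα
    calc ∏ i, latticeGaussian c (q * α i)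
        ≤ C₂ * (c * (q * (2 : ℝ) ^ ((j : ℤ) - (k : ℤ))) ^ 2) ^ (-a) :=
          hle₂ c _ (fun i ↦ q * α i) i hc (by positivity) hi
      _ = C₂ * (π / 2) ^ (-a) * (divisorGain (2 * a) j q * V ^ a) := by
          rw [gaussianWidth_mul_sq_rpow_neg a hq' hV0, divisorGain, if_pos hdvd, ← mul_assoc]
      _ ≤ _ := by
          have := divisorGain_nonneg (2 * a) j q
          gcongr
          exact le_add_of_nonneg_left hC₁.le
  · rw [divisorGain, if_neg hdvd, one_mul]
    calc ∏ i, latticeGaussian c (q * α i) ≤ C₁ * 1 := by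
          rw [mul_one]; exact hle₁ c (fun i ↦ q * α i) hc
      _ ≤ (C₁ + C₂ * (π / 2) ^ (-a)) * V ^ a := by
          gcongr
          · exact le_add_of_nonneg_right (by positivity)
          · exact Real.one_le_rpow hV ha.le

lemma sq_mul_inv_sq_mul_le_two {q τ N : ℝ} (hq : 0 < q) (hqN : q ≤ N) (hτ : |τ| ≤ 1 / (N * q)) :
    q ^ 2 * (N ^ 2)⁻¹ * (1 + (τ / (N ^ 2)⁻¹) ^ 2) ≤ 2 := by
  have hN : 0 < N := hq.trans_le hqN
  have hqN' : (q / N) ^ 2 ≤ 1 := pow_le_one₀ (by positivity) ((div_le_one hN).2 hqN)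
  have hτ' : (|τ| * (N * q)) ^ 2 ≤ 1 :=
    pow_le_one₀ (by positivity) ((le_div_iff₀ (by positivity)).1 hτ)
  calc q ^ 2 * (N ^ 2)⁻¹ * (1 + (τ / (N ^ 2)⁻¹) ^ 2) = (q / N) ^ 2 + (|τ| * (N * q)) ^ 2 := by
        rw [mul_pow, sq_abs]
        field_simp
    _ ≤ 2 := by linarith

/-- The profile of the bound on a major arc as a function of the distance to its centre, rescaled
by `ε`. Of the decay `(1 + u²)^{-d/4}` that the theta functions provide, this integrable part is
kept and the rest is traded for the gain in `j`. -/
def arcProfile (u : ℝ) : ℝ := (1 + u ^ 2) ^ (-(3 / 4) : ℝ)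

lemma arcProfile_nonneg (u : ℝ) : 0 ≤ arcProfile u := by
  unfold arcProfile
  positivity

lemma integrable_arcProfile : MeasureTheory.Integrable arcProfile := by
  have hrank : (Module.finrank ℝ ℝ : ℝ) < 3 / 2 := by
    rw [Module.finrank_self]
    norm_num
  refine (integrable_rpow_neg_one_add_norm_sq hrank).congr (.of_forall fun u ↦ ?_)
  simp only [arcProfile, Real.norm_eq_abs, sq_abs]
  norm_num

lemma exists_norm_sHat_le_arcProfile {d : ℕ} (hd : 3 < d) :
    ∃ C, 0 < C ∧ ∀ (j k p q : ℕ) (t : ℝ) (α : Fin d → ℝ), 0 < q → q ≤ 2 ^ k → p.Coprime q →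
      |t - p / q| ≤ 1 / (2 ^ k * q) → α ∉ OmegaJK d j k →
      ‖sHat ((2 : ℝ) ^ (2 * k))⁻¹ t α‖ ≤
        C * (q * ((2 : ℝ) ^ (2 * k))⁻¹) ^ (-(d / 2) : ℝ) * divisorGain ((d - 3) / 2) j q *
          arcProfile ((t - p / q) / ((2 : ℝ) ^ (2 * k))⁻¹) := by
  have hd' : (3 : ℝ) < d := by exact_mod_cast hd
  obtain ⟨C, hC, hle⟩ :=
    exists_prod_latticeGaussian_le_divisorGain d (a := (d - 3) / 4) (by linarith)
  rw [show 2 * (((d : ℝ) - 3) / 4) = (d - 3) / 2 by ring] at hle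
  refine ⟨C, hC, fun j k p q t α hq hqk hpq ht hα ↦ ?_⟩
  have : NeZero q := ⟨hq.ne'⟩
  set ε : ℝ := ((2 : ℝ) ^ (2 * k))⁻¹ with hε_def
  have hε : 0 < ε := by positivity
  set V := 1 + ((t - p / q) / ε) ^ 2 with hV_def
  have hV : 1 ≤ V := le_add_of_nonneg_right (sq_nonneg _)
  have hV0 : 0 < V := by linarith
  have hqV : q ^ 2 * ε * V ≤ 2 := by
    rw [hV_def, hε_def, pow_mul']
    exact sq_mul_inv_sq_mul_le_two (by exact_mod_cast hq) (by exact_mod_cast hqk) ht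
  calc ‖sHat ε t α‖
      ≤ (q * ε) ^ (-(d / 2) : ℝ) * V ^ (-(d / 4) : ℝ) *
          ∏ i, latticeGaussian (π / (2 * (q ^ 2 * ε * V))) (q * α i) :=
        norm_sHat_le_of_coprime hpq hε t α
    _ ≤ (q * ε) ^ (-(d / 2) : ℝ) * V ^ (-(d / 4) : ℝ) *
          (C * (divisorGain ((d - 3) / 2) j q * V ^ ((d - 3) / 4 : ℝ))) := by
        gcongr
        exact hle j k q V α hq hV hqV hα
    _ = C * (q * ε) ^ (-(d / 2) : ℝ) * divisorGain ((d - 3) / 2) j q *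
          (V ^ (-(d / 4) : ℝ) * V ^ ((d - 3) / 4 : ℝ)) := by ring
    _ = _ := by
        rw [← Real.rpow_add hV0, arcProfile, ← hV_def,
          show (-(d / 4) + (d - 3) / 4 : ℝ) = -(3 / 4) by ring]

end PointwiseBound

section FareyDissection

open Finset MeasureTheory

lemma exists_nat_coprime_abs_sub_div_le {t : ℝ} (ht : t ∈ Set.Icc 0 1) {N : ℕ} (hN : 0 < N) :
    ∃ p q : ℕ, 0 < q ∧ q ≤ N ∧ p ≤ q ∧ p.Coprime q ∧ |t - p / q| ≤ 1 / (N * q) := by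
  obtain ⟨r, hr, hden⟩ := Real.exists_rat_abs_sub_le_and_den_le t hN
  have hq : (0 : ℝ) < r.den := by exact_mod_cast r.den_pos
  have hN' : (0 : ℝ) < N := by exact_mod_cast hN
  have hlt : |t * r.den - r.num| < 1 := by
    calc |t * r.den - r.num| = |t - r| * r.den := by
          rw [← abs_of_pos hq, ← abs_mul, abs_of_pos hq, sub_mul]
          congr 2
          exact_mod_cast (Rat.mul_den_eq_num r).symm
      _ ≤ 1 / ((N + 1) * r.den) * r.den := by gcongr
      _ = 1 / (N + 1) := by field_simp
      _ < 1 := by rw [div_lt_one (by positivity)]; linarith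
  rw [abs_lt] at hlt
  have hnum : 0 ≤ r.num := by
    have : (-1 : ℝ) < r.num := by nlinarith [ht.1]
    have : -1 < r.num := by exact_mod_cast this
    omega
  have hle : r.num ≤ r.den := by
    have : (r.num : ℝ) < r.den + 1 := by nlinarith [ht.2]
    have : r.num < (r.den : ℤ) + 1 := by exact_mod_cast this
    omega
  have hcast : ((r.num.natAbs : ℕ) : ℝ) / r.den = r := by
    rw [Nat.cast_natAbs, abs_of_nonneg hnum, Rat.cast_def]
  refine ⟨r.num.natAbs, r.den, r.den_pos, hden, by omega, r.reduced, ?_⟩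
  rw [hcast]
  refine hr.trans ?_
  gcongr
  linarith

/-- A majorant on `[0, 1]` for functions that concentrate at the fractions `p / q` with `q ≤ N`:
the sum over these fractions, whether reduced or not, of bumps of height `w q`, profile `φ` and
width `ε`. -/
def fareyMajorant (N : ℕ) (w : ℕ → ℝ) (φ : ℝ → ℝ) (ε t : ℝ) : ℝ :=
  ∑ q ∈ Icc 1 N, ∑ p ∈ range (q + 1), w q * φ ((t - p / q) / ε)

variable {N : ℕ} {w : ℕ → ℝ} {φ : ℝ → ℝ} {ε : ℝ}

lemma fareyMajorant_nonneg (hw : ∀ q, 0 ≤ w q) (hφ : ∀ u, 0 ≤ φ u) (t : ℝ) :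
    0 ≤ fareyMajorant N w φ ε t :=
  sum_nonneg fun q _ ↦ sum_nonneg fun _ _ ↦ mul_nonneg (hw q) (hφ _)

lemma le_fareyMajorant (hw : ∀ q, 0 ≤ w q) (hφ : ∀ u, 0 ≤ φ u) {p q : ℕ} (hq : q ∈ Icc 1 N)
    (hpq : p ≤ q) (t : ℝ) :
    w q * φ ((t - p / q) / ε) ≤ fareyMajorant N w φ ε t := by
  have hbump (q p : ℕ) : 0 ≤ w q * φ ((t - p / q) / ε) := mul_nonneg (hw q) (hφ _)
  calc w q * φ ((t - p / q) / ε)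
      ≤ ∑ p ∈ range (q + 1), w q * φ ((t - p / q) / ε) :=
        single_le_sum (f := fun p : ℕ ↦ w q * φ ((t - p / q) / ε)) (fun p _ ↦ hbump q p)
          (mem_range_succ_iff.2 hpq)
    _ ≤ fareyMajorant N w φ ε t :=
        single_le_sum (f := fun q : ℕ ↦ ∑ p ∈ range (q + 1), w q * φ ((t - p / q) / ε))
          (fun q _ ↦ sum_nonneg fun p _ ↦ hbump q p) hq

lemma integrable_bump (hφ : Integrable φ) (hε : ε ≠ 0) (c x : ℝ) :
    Integrable fun t ↦ c * φ ((t - x) / ε) :=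
  ((hφ.comp_div hε).comp_sub_right x).const_mul c

lemma integrable_fareyMajorant (hφ : Integrable φ) (hε : ε ≠ 0) :
    Integrable (fareyMajorant N w φ ε) :=
  integrable_finsetSum _ fun _ _ ↦ integrable_finsetSum _ fun _ _ ↦ integrable_bump hφ hε _ _

lemma integral_fareyMajorant (hφ : Integrable φ) (hε : 0 < ε) :
    ∫ t, fareyMajorant N w φ ε t = (∑ q ∈ Icc 1 N, (q + 1) * w q) * (ε * ∫ u, φ u) := by
  have hbump (c x : ℝ) : ∫ t, c * φ ((t - x) / ε) = c * (ε * ∫ u, φ u) := by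
    rw [integral_const_mul, integral_sub_right_eq_self (fun t ↦ φ (t / ε)) x,
      Measure.integral_comp_div, abs_of_pos hε, smul_eq_mul]
  simp only [fareyMajorant]
  rw [integral_finsetSum _ fun _ _ ↦
    integrable_finsetSum _ fun _ _ ↦ integrable_bump hφ hε.ne' _ _, sum_mul]
  refine sum_congr rfl fun q _ ↦ ?_
  rw [integral_finsetSum _ fun _ _ ↦ integrable_bump hφ hε.ne' _ _]
  simp only [hbump, sum_const, card_range, nsmul_eq_mul]
  push_cast
  ring

lemma intervalIntegral_le_of_le_near_fractions {f : ℝ → ℝ} (hN : 0 < N) (hε : 0 < ε)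
    (hφ : Integrable φ) (hφ0 : ∀ u, 0 ≤ φ u) (hw : ∀ q, 0 ≤ w q) (hf0 : ∀ t, 0 ≤ f t)
    (hf : ∀ (p q : ℕ) (t : ℝ), 0 < q → q ≤ N → p.Coprime q → |t - p / q| ≤ 1 / (N * q) →
      f t ≤ w q * φ ((t - p / q) / ε)) :
    ∫ t in (0 : ℝ)..1, f t ≤ 2 * ε * (∫ u, φ u) * ∑ q ∈ Icc 1 N, q * w q := by
  have hle : ∀ t ∈ Set.Ioc (0 : ℝ) 1, f t ≤ fareyMajorant N w φ ε t := fun t ht ↦ by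
    obtain ⟨p, q, hq, hqN, hpq, hcop, hnear⟩ :=
      exists_nat_coprime_abs_sub_div_le (Set.Ioc_subset_Icc_self ht) hN
    exact (hf p q t hq hqN hcop hnear).trans
      (le_fareyMajorant hw hφ0 (mem_Icc.2 ⟨hq, hqN⟩) hpq t)
  have hmaj : Integrable (fareyMajorant N w φ ε) := integrable_fareyMajorant hφ hε.ne'
  have hI : 0 ≤ ∫ u, φ u := integral_nonneg hφ0
  calc ∫ t in (0 : ℝ)..1, f t = ∫ t in Set.Ioc (0 : ℝ) 1, f t :=
        intervalIntegral.integral_of_le zero_le_one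
    _ ≤ ∫ t in Set.Ioc (0 : ℝ) 1, fareyMajorant N w φ ε t :=
        integral_mono_of_nonneg (.of_forall hf0) hmaj.integrableOn
          ((ae_restrict_iff' measurableSet_Ioc).2 (.of_forall hle))
    _ ≤ ∫ t, fareyMajorant N w φ ε t :=
        setIntegral_le_integral hmaj (.of_forall (fareyMajorant_nonneg hw hφ0))
    _ = (∑ q ∈ Icc 1 N, (q + 1) * w q) * (ε * ∫ u, φ u) := integral_fareyMajorant hφ hε
    _ ≤ (∑ q ∈ Icc 1 N, 2 * q * w q) * (ε * ∫ u, φ u) := by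
        gcongr with q hq
        · exact hw q
        · have hq1 : (1 : ℝ) ≤ q := by exact_mod_cast (mem_Icc.1 hq).1
          linarith
    _ = 2 * ε * (∫ u, φ u) * ∑ q ∈ Icc 1 N, q * w q := by
        simp only [mul_assoc, ← mul_sum]
        ring

end FareyDissection

section MajorArcSum

open Finset

lemma mul_mul_rpow_neg_eq {q ε : ℝ} (hq : 0 < q) (hε : 0 < ε) (x : ℝ) :
    ε * (q * (q * ε) ^ (-x)) = ε ^ (1 - x) * q ^ (-(x - 1)) := by
  rw [Real.mul_rpow hq.le hε.le, neg_sub, Real.rpow_sub hq, Real.rpow_sub hε, Real.rpow_one,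
    Real.rpow_one, Real.rpow_neg hq.le, Real.rpow_neg hε.le]
  ring

lemma exists_intervalIntegral_iSup_norm_sHat_le {d : ℕ} (hd : 3 < d) :
    ∃ C : ℝ, 0 ≤ C ∧ ∀ k j : ℕ,
      ∫ t in (0 : ℝ)..1, ⨆ (α : Fin d → ℝ) (_ : α ∉ OmegaJK d j k),
          ‖sHat (((2 : ℝ) ^ (2 * k))⁻¹) t α‖ ≤
        C * (((2 : ℝ) ^ (2 * k))⁻¹) ^ (1 - d / 2 : ℝ) *
          ∑ q ∈ Icc (1 : ℕ) (2 ^ k),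
            (q : ℝ) ^ (-(d / 2 - 1) : ℝ) * divisorGain ((d - 3) / 2) j q := by
  obtain ⟨C, hC, hle⟩ := exists_norm_sHat_le_arcProfile hd
  refine ⟨2 * C * ∫ u, arcProfile u,
    mul_nonneg (by positivity) (MeasureTheory.integral_nonneg arcProfile_nonneg), fun k j ↦ ?_⟩
  set ε : ℝ := ((2 : ℝ) ^ (2 * k))⁻¹
  have hε : 0 < ε := by positivity
  let w (q : ℕ) : ℝ := C * (q * ε) ^ (-(d / 2) : ℝ) * divisorGain ((d - 3) / 2) j q
  have hw (q : ℕ) : 0 ≤ w q := mul_nonneg (by positivity) (divisorGain_nonneg _ _ _)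
  have hf0 (t : ℝ) : 0 ≤ ⨆ (α : Fin d → ℝ) (_ : α ∉ OmegaJK d j k), ‖sHat ε t α‖ :=
    Real.iSup_nonneg fun _ ↦ Real.iSup_nonneg fun _ ↦ norm_nonneg _
  refine (intervalIntegral_le_of_le_near_fractions (pow_pos two_pos k) hε integrable_arcProfile
    arcProfile_nonneg hw hf0 fun p q t hq hqk hpq ht ↦ ?_).trans_eq ?_
  · have hbound : 0 ≤ w q * arcProfile ((t - p / q) / ε) :=
      mul_nonneg (hw q) (arcProfile_nonneg _)
    rw [Nat.cast_pow, Nat.cast_ofNat] at ht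
    exact Real.iSup_le (fun α ↦ Real.iSup_le (hle j k p q t α hq hqk hpq ht) hbound) hbound
  · simp only [mul_sum]
    refine sum_congr rfl fun q hq ↦ ?_
    have hq0 : (0 : ℝ) < q := by exact_mod_cast (mem_Icc.1 hq).1
    linear_combination (2 * C * (∫ u, arcProfile u) * divisorGain ((d - 3) / 2) j q) *
      mul_mul_rpow_neg_eq hq0 hε (d / 2)

end MajorArcSum

theorem main_integral_estimate_general (d : ℕ) (hd : 5 ≤ d) :
    ∃ C : ℝ, 0 < C ∧ ∀ k j : ℕ, 1 ≤ j →
      (∫ t in (0 : ℝ)..1,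
          ⨆ (α : Fin d → ℝ) (_ : α ∉ OmegaJK d j k),
            ‖sHat (((2 : ℝ) ^ (2 * k))⁻¹) t α‖)
        ≤ C * (((2 : ℝ) ^ (2 * k))⁻¹) ^ (-((d : ℝ) - 2) / 2) *
            (2 : ℝ) ^ (-(((d : ℝ) - 4) / 2 * j)) / (j : ℝ) := by
  have hd' : (5 : ℝ) ≤ d := by exact_mod_cast hd
  obtain ⟨C₁, hC₁, hint⟩ := exists_intervalIntegral_iSup_norm_sHat_le (show 3 < d by omega)
  obtain ⟨C₂, hC₂, hsum⟩ := exists_sum_rpow_neg_mul_divisorGain_le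
    (s := d / 2 - 1) (σ := (d - 3) / 2) (by linarith) (by linarith)
  rw [show (1 - d / 2 : ℝ) = -(d - 2) / 2 by ring] at hint
  rw [show (d / 2 - 1 - 1 : ℝ) = (d - 4) / 2 by ring] at hsum
  refine ⟨C₁ * C₂ + 1, by positivity, fun k j hj ↦ (hint k j).trans ?_⟩
  set ε : ℝ := ((2 : ℝ) ^ (2 * k))⁻¹
  calc C₁ * ε ^ (-((d : ℝ) - 2) / 2) *
          ∑ q ∈ Finset.Icc (1 : ℕ) (2 ^ k),
            (q : ℝ) ^ (-(d / 2 - 1) : ℝ) * divisorGain ((d - 3) / 2) j q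
      ≤ C₁ * ε ^ (-((d : ℝ) - 2) / 2) * (C₂ * ((2 : ℝ) ^ (-(((d : ℝ) - 4) / 2 * j)) / j)) := by
        gcongr
        exact hsum j _ hj
    _ = C₁ * C₂ * (ε ^ (-((d : ℝ) - 2) / 2) * (2 : ℝ) ^ (-(((d : ℝ) - 4) / 2 * j)) / j) := by ring
    _ ≤ (C₁ * C₂ + 1) * (ε ^ (-((d : ℝ) - 2) / 2) * (2 : ℝ) ^ (-(((d : ℝ) - 4) / 2 * j)) / j) := by
        gcongr
        linarith
    _ = _ := by ring

/-- **Estimate (StBound)**: for `d ≥ 5`, `1 ≤ j ≤ log₂ k - 2` and `ε = 2^{-2k}`,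
`∫₀¹ sup_{α ∈ Ω_{j,k}^c} |ŝ_t(α)| dt ≤ C_d ε^{-(d-2)/2} 2^{-j/2} j⁻¹`. -/
theorem main_integral_estimate (d : ℕ) (hd : 5 ≤ d) :
    ∃ C : ℝ, 0 < C ∧ ∀ (k j : ℕ), 1 ≤ j → (j : ℝ) ≤ Real.logb 2 (k : ℝ) - 2 →
      (∫ t in (0 : ℝ)..1,
          ⨆ (α : Fin d → ℝ) (_ : α ∉ OmegaJK d j k),
            ‖sHat (d := d) (((2 : ℝ) ^ (2 * k))⁻¹) t α‖)
        ≤ C * (((2 : ℝ) ^ (2 * k))⁻¹) ^ (-((d : ℝ) - 2) / 2) *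
            (2 : ℝ) ^ (-(j : ℝ) / 2) / (j : ℝ) := by
  obtain ⟨C, hC, hle⟩ := main_integral_estimate_general d hd
  have hd' : (5 : ℝ) ≤ d := by exact_mod_cast hd
  refine ⟨C, hC, fun k j hj _ ↦ (hle k j hj).trans ?_⟩
  gcongr
  · exact one_le_two
  · nlinarith [j.cast_nonneg (α := ℝ)]
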